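/- There exists a recurrent tiling of ℕ×ℕ, i.e. a function f : ℕ×ℕ → T satisfying (T1), (T2) and (T3), if and only if ¬A is not valid on the frame ⟨ℕ,≤⟩ (equivalently, if and only if A is satisfiable on ⟨ℕ,≤⟩). -/

import Mathlib

namespace FOML

/-- First-order modal formulas over a signature assigning to each arity `n` a type
`Pred n` of `n`-ary predicate letters; individual variables are indexed by `ℕ`.
(0-ary predicate letters are proposition letters.) -/
inductive Fml (Pred : ℕ → Type) : Type
  | atom : {n : ℕ} → Pred n → (Fin n → ℕ) → Fml Pred
  | bot  : Fml Pred
  | imp  : Fml Pred → Fml Pred → Fml Pred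
  | box  : Fml Pred → Fml Pred
  | all  : ℕ → Fml Pred → Fml Pred

namespace Fml

variable {Pred : ℕ → Type}

def neg (φ : Fml Pred) : Fml Pred := imp φ bot
def top : Fml Pred := neg bot
def and (φ ψ : Fml Pred) : Fml Pred := neg (imp φ (neg ψ))
def or (φ ψ : Fml Pred) : Fml Pred := imp (neg φ) ψ
def iff (φ ψ : Fml Pred) : Fml Pred := and (imp φ ψ) (imp ψ φ)
def dia (φ : Fml Pred) : Fml Pred := neg (box (neg φ))
def ex (x : ℕ) (φ : Fml Pred) : Fml Pred := neg (all x (neg φ))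

def bigAnd : List (Fml Pred) → Fml Pred
  | [] => top
  | φ :: l => and φ (bigAnd l)

def bigOr : List (Fml Pred) → Fml Pred
  | [] => bot
  | φ :: l => or φ (bigOr l)

/-- Iterated box: `□⁰φ = φ`, `□ⁿ⁺¹φ = □□ⁿφ`. -/
def boxN : ℕ → Fml Pred → Fml Pred
  | 0, φ => φ
  | n + 1, φ => box (boxN n φ)

/-- Replace every occurrence of `□` by `□⁺`, where `□⁺ψ = ψ ∧ □ψ`
(equivalently, every `◇` by its dual `◇⁺ψ = ◇ψ ∨ ψ`). -/
def plus : Fml Pred → Fml Pred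
  | atom P a => atom P a
  | bot => bot
  | imp φ ψ => imp (plus φ) (plus ψ)
  | box φ => and (plus φ) (box (plus φ))
  | all x φ => all x (plus φ)

end Fml

/-- A Kripke model with expanding domains based on the frame `⟨W, R⟩`:
a domain function `D` into nonempty subsets of the domain `Dom`, expanding along `R`,
and an interpretation `I` of predicate letters at each world, with
`I(w,P) ⊆ D(w)ⁿ` for `n`-ary `P`. -/
structure KModel (W : Type*) (R : W → W → Prop) (Pred : ℕ → Type) where
  Dom : Type
  D : W → Set Dom
  D_ne : ∀ w, (D w).Nonempty
  D_mono : ∀ ⦃w v : W⦄, R w v → D w ⊆ D v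
  I : W → (n : ℕ) → Pred n → (Fin n → Dom) → Prop
  I_dom : ∀ (w : W) (n : ℕ) (P : Pred n) (as : Fin n → Dom), I w n P as → ∀ i, as i ∈ D w

variable {W : Type*} {R : W → W → Prop} {Pred : ℕ → Type}

/-- Truth of a formula at a world of a Kripke model under an assignment. -/
def truth (M : KModel W R Pred) : Fml Pred → W → (ℕ → M.Dom) → Prop
  | .atom (n := n) P args, w, g => M.I w n P (fun i => g (args i))
  | .bot, _, _ => False
  | .imp φ ψ, w, g => truth M φ w g → truth M ψ w g
  | .box φ, w, g => ∀ v : W, R w v → truth M φ v g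
  | .all x φ, w, g => ∀ d ∈ M.D w, truth M φ w (Function.update g x d)

/-- A formula is true at a world `w` if it is true under every assignment
taking values in the domain of `w`. -/
def trueAt (M : KModel W R Pred) (w : W) (φ : Fml Pred) : Prop :=
  ∀ g : ℕ → M.Dom, (∀ x, g x ∈ M.D w) → truth M φ w g

/-- `φ ∈ L(W,R)`: validity on the frame `⟨W,R⟩` (truth in every model with
expanding domains based on it, at every world). -/
def ValidOn (R : W → W → Prop) (φ : Fml Pred) : Prop :=
  ∀ (M : KModel W R Pred) (w : W), trueAt M w φ

/-- The model has (globally) constant domains. -/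
def ConstDom (M : KModel W R Pred) : Prop := ∀ w v : W, M.D w = M.D v

/-- `φ ∈ L_c(W,R)`: truth in every model with constant domains based on `⟨W,R⟩`. -/
def ValidOnC (R : W → W → Prop) (φ : Fml Pred) : Prop :=
  ∀ (M : KModel W R Pred), ConstDom M → ∀ w : W, trueAt M w φ

/-- A finite set `T = {t₀, …, t_s}` of tile types (represented as `Fin (s+1)`, with
`t₀ = 0`), each with four edge colours. -/
structure TileSet where
  s : ℕ
  left : Fin (s + 1) → ℕ
  right : Fin (s + 1) → ℕ
  up : Fin (s + 1) → ℕ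
  down : Fin (s + 1) → ℕ

namespace TileSet

/-- (T1): colours match horizontally. -/
def T1 (ts : TileSet) (f : ℕ → ℕ → Fin (ts.s + 1)) : Prop :=
  ∀ n m : ℕ, ts.right (f n m) = ts.left (f (n + 1) m)

/-- (T2): colours match vertically. -/
def T2 (ts : TileSet) (f : ℕ → ℕ → Fin (ts.s + 1)) : Prop :=
  ∀ n m : ℕ, ts.up (f n m) = ts.down (f n (m + 1))

/-- (T3): the tile type `t₀` occurs infinitely often in the leftmost column. -/
def T3 (ts : TileSet) (f : ℕ → ℕ → Fin (ts.s + 1)) : Prop :=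
  {m : ℕ | f 0 m = 0}.Infinite

end TileSet

/-- The predicate letters used in the encoding: a binary letter `◁`; monadic letters
`M`, `P₀, …, P_{s+2}` and `P`; proposition letters `p` and `q`. -/
inductive Letter (s : ℕ) : ℕ → Type
  | lt : Letter s 2
  | M : Letter s 1
  | P : Fin (s + 3) → Letter s 1
  | Pm : Letter s 1
  | p : Letter s 0
  | q : Letter s 0

namespace Enc

/-- Formulas in the language of the encoding. -/
abbrev F (ts : TileSet) := Fml (Letter ts.s)

/-- The list of all tile types. -/
def tiles (ts : TileSet) : List (Fin (ts.s + 1)) := List.finRange (ts.s + 1)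

/-- Tile indices regarded as indices of the letters `P₀, …, P_{s+2}`. -/
def tl (ts : TileSet) (t : Fin (ts.s + 1)) : Fin (ts.s + 3) := ⟨t.1, by omega⟩

def pp (ts : TileSet) : F ts := .atom Letter.p Fin.elim0
def qq (ts : TileSet) : F ts := .atom Letter.q Fin.elim0
def Mx (ts : TileSet) (v : ℕ) : F ts := .atom Letter.M (fun _ => v)
def Px (ts : TileSet) (j : Fin (ts.s + 3)) (v : ℕ) : F ts := .atom (Letter.P j) (fun _ => v)
def PP (ts : TileSet) (v : ℕ) : F ts := .atom Letter.Pm (fun _ => v)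
def ltA (ts : TileSet) (v w : ℕ) : F ts := .atom Letter.lt ![v, w]

/-- `⟐φ = ◇(π ∧ ◇(¬π ∧ φ))`, for a "marker" formula `π` (the paper uses `π = p`,
and `π = ∀x P(x)` for the operator `⊡`). -/
def pdia (ts : TileSet) (π φ : F ts) : F ts := .dia (.and π (.dia (.and (.neg π) φ)))

/-- Iterated `⟐`. -/
def pdiaN (ts : TileSet) (π : F ts) : ℕ → F ts → F ts
  | 0, φ => φ
  | n + 1, φ => pdia ts π (pdiaN ts π n φ)

/-- `U(x) = ⋀_{t ∈ T} ¬P_t(x)`, with the tile letters given by `Pf`. -/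
def Ug (ts : TileSet) (Pf : Fin (ts.s + 1) → ℕ → F ts) (v : ℕ) : F ts :=
  .bigAnd ((tiles ts).map (fun t => .neg (Pf t v)))

/- The conjuncts of the formula `A`, parametrised by the formulas standing for
`x ◁ y` (`rel`), `M(x)` (`Mf`), `P_t(x)` (`Pf`) and `p` (`pf`); the individual
variables `x`, `y` are `0`, `1`. -/

/-- `A₀ = ∃x □U(x)` -/
def A0g (ts : TileSet) (Pf : Fin (ts.s + 1) → ℕ → F ts) : F ts :=
  .ex 0 (.box (Ug ts Pf 0))

/-- `A₁ = ∃x(¬U(x) ∧ M(x))` -/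
def A1g (ts : TileSet) (Mf : ℕ → F ts) (Pf : Fin (ts.s + 1) → ℕ → F ts) : F ts :=
  .ex 0 (.and (.neg (Ug ts Pf 0)) (Mf 0))

/-- `A₂ = ∀x∃y (x ◁ y)` -/
def A2g (ts : TileSet) (rel : ℕ → ℕ → F ts) : F ts := .all 0 (.ex 1 (rel 0 1))

/-- `A₃ = ∀x∀y(x◁y → □(∃x M(x) → x◁y))` -/
def A3g (ts : TileSet) (rel : ℕ → ℕ → F ts) (Mf : ℕ → F ts) : F ts :=
  .all 0 (.all 1 (.imp (rel 0 1) (.box (.imp (.ex 0 (Mf 0)) (rel 0 1)))))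

/-- `A₄ = ∀x∀y(x◁y → □(M(x) ↔ ¬p ∧ ⟐M(y) ∧ ¬⟐²M(y)))` -/
def A4g (ts : TileSet) (rel : ℕ → ℕ → F ts) (Mf : ℕ → F ts) (pf : F ts) : F ts :=
  .all 0 (.all 1 (.imp (rel 0 1)
    (.box (.iff (Mf 0)
      (.and (.neg pf) (.and (pdia ts pf (Mf 1)) (.neg (pdiaN ts pf 2 (Mf 1)))))))))

/-- `A₅ = ∀x∀y □⋀_{t∈T}(M(x) ∧ P_t(y) → □(M(x) → P_t(y)))` -/
def A5g (ts : TileSet) (Mf : ℕ → F ts) (Pf : Fin (ts.s + 1) → ℕ → F ts) : F ts :=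
  .all 0 (.all 1 (.box (.bigAnd ((tiles ts).map fun t =>
    .imp (.and (Mf 0) (Pf t 1)) (.box (.imp (Mf 0) (Pf t 1)))))))

/-- `A₆ = ∀x □⋀_{t∈T}(P_t(x) → ⋀_{t'≠t} ¬P_{t'}(x))` -/
def A6g (ts : TileSet) (Pf : Fin (ts.s + 1) → ℕ → F ts) : F ts :=
  .all 0 (.box (.bigAnd ((tiles ts).map fun t =>
    .imp (Pf t 0)
      (.bigAnd (((tiles ts).filter (fun t' => decide (t' ≠ t))).map fun t' => .neg (Pf t' 0))))))

/-- `A₇ = ∀x∀y □⋀_{t∈T}(x◁y ∧ P_t(x) → ⋁_{right(t)=left(t')} P_{t'}(y))` -/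
def A7g (ts : TileSet) (rel : ℕ → ℕ → F ts) (Pf : Fin (ts.s + 1) → ℕ → F ts) : F ts :=
  .all 0 (.all 1 (.box (.bigAnd ((tiles ts).map fun t =>
    .imp (.and (rel 0 1) (Pf t 0))
      (.bigOr (((tiles ts).filter fun t' => decide (ts.right t = ts.left t')).map
        fun t' => Pf t' 1))))))

/-- `A₈ = ∀x∀y □⋀_{t∈T}(M(x) ∧ P_t(y) → □(∃y(x◁y ∧ M(y)) → ⋁_{up(t)=down(t')} P_{t'}(y)))` -/
def A8g (ts : TileSet) (rel : ℕ → ℕ → F ts) (Mf : ℕ → F ts)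
    (Pf : Fin (ts.s + 1) → ℕ → F ts) : F ts :=
  .all 0 (.all 1 (.box (.bigAnd ((tiles ts).map fun t =>
    .imp (.and (Mf 0) (Pf t 1))
      (.box (.imp (.ex 1 (.and (rel 0 1) (Mf 1)))
        (.bigOr (((tiles ts).filter fun t' => decide (ts.up t = ts.down t')).map
          fun t' => Pf t' 1))))))))

/-- `A₉ = ∀x(M(x) → □⟐P_{t₀}(x))` -/
def A9g (ts : TileSet) (Mf : ℕ → F ts) (Pf : Fin (ts.s + 1) → ℕ → F ts) (pf : F ts) : F ts :=
  .all 0 (.imp (Mf 0) (.box (pdia ts pf (Pf 0 0))))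

/-- The list `[A₀, …, A₈]` (all conjuncts of `A` except `A₉`), parametrised. -/
def AlistB (ts : TileSet) (rel : ℕ → ℕ → F ts) (Mf : ℕ → F ts)
    (Pf : Fin (ts.s + 1) → ℕ → F ts) (pf : F ts) : List (F ts) :=
  [A0g ts Pf, A1g ts Mf Pf, A2g ts rel, A3g ts rel Mf, A4g ts rel Mf pf,
   A5g ts Mf Pf, A6g ts Pf, A7g ts rel Pf, A8g ts rel Mf Pf]

/-- The tile letters `P_{t₀}, …, P_{t_s}`, i.e. `P₀, …, P_s`. -/
def PfA (ts : TileSet) : Fin (ts.s + 1) → ℕ → F ts := fun t v => Px ts (tl ts t) v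

/-- The formula `A`: the conjunction of `A₀` through `A₉`. -/
def A (ts : TileSet) : F ts :=
  .bigAnd (AlistB ts (ltA ts) (Mx ts) (PfA ts) (pp ts) ++
    [A9g ts (Mx ts) (PfA ts) (pp ts)])

/-- The formula `B`: the conjunction of `A₀` through `A₈`. -/
def B (ts : TileSet) : F ts := .bigAnd (AlistB ts (ltA ts) (Mx ts) (PfA ts) (pp ts))

/-- `A₉• = ∀x(M(x) → □(∃y M(y) → ⟐(∃y M(y) → P_{t₀}(x))))` -/
def A9bul (ts : TileSet) : F ts :=
  .all 0 (.imp (Mx ts 0) (.box (.imp (.ex 1 (Mx ts 1))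
    (pdia ts (pp ts) (.imp (.ex 1 (Mx ts 1)) (PfA ts 0 0))))))

/-- The formula `A•`: the conjunction of `A₀` through `A₈` together with `A₉•`. -/
def Abullet (ts : TileSet) : F ts :=
  .bigAnd (AlistB ts (ltA ts) (Mx ts) (PfA ts) (pp ts) ++ [A9bul ts])

/-- `⟐(P_{s+1}(x) ∧ P_{s+2}(y))`, the formula substituted for `x ◁ y` in `A′`. -/
def relA' (ts : TileSet) (v w : ℕ) : F ts :=
  pdia ts (pp ts) (.and (Px ts ⟨ts.s + 1, by omega⟩ v) (Px ts ⟨ts.s + 2, by omega⟩ w))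

/-- The formula `A′`: the result of substituting `⟐(P_{s+1}(x) ∧ P_{s+2}(y))` for
`x ◁ y` throughout `A`. -/
def A' (ts : TileSet) : F ts :=
  .bigAnd (AlistB ts (relA' ts) (Mx ts) (PfA ts) (pp ts) ++
    [A9g ts (Mx ts) (PfA ts) (pp ts)])

/-- `∀x P(x)`, the marker formula of the operator `⊡`. -/
def pfS (ts : TileSet) : F ts := .all 0 (PP ts 0)

/-- `⊡φ = ◇(∀x P(x) ∧ ◇(¬∀x P(x) ∧ φ))`. -/
def bdia (ts : TileSet) (φ : F ts) : F ts := pdia ts (pfS ts) φ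

/-- Iterated `⊡`. -/
def bdiaN (ts : TileSet) (n : ℕ) (φ : F ts) : F ts := pdiaN ts (pfS ts) n φ

/-- `q ∧ P(v)`, the replacement of `M(v)`. -/
def MS (ts : TileSet) (v : ℕ) : F ts := .and (qq ts) (PP ts v)

/-- `βₙ(x) = ∃y(⊡^{s+4}(q ∧ P(y)) ∧ ¬⊡^{s+5}(q ∧ P(y)) ∧
⊡(⊡^{n+1}(q ∧ P(y)) ∧ ¬⊡^{n+2}(q ∧ P(y)) ∧ P(x)))`, and `βₙ(y)` with `x`, `y` exchanged
(the variables `x`, `y` are `0`, `1`, so the bound variable is `1 - v`). -/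
def beta (ts : TileSet) (n : Fin (ts.s + 3)) (v : ℕ) : F ts :=
  .ex (1 - v) (.and (bdiaN ts (ts.s + 4) (MS ts (1 - v)))
    (.and (.neg (bdiaN ts (ts.s + 5) (MS ts (1 - v))))
      (bdia ts (.and (bdiaN ts ((n : ℕ) + 1) (MS ts (1 - v)))
        (.and (.neg (bdiaN ts ((n : ℕ) + 2) (MS ts (1 - v)))) (PP ts v))))))

/-- The replacement `βₜ` of the tile letters. -/
def PfS (ts : TileSet) : Fin (ts.s + 1) → ℕ → F ts := fun t v => beta ts (tl ts t) v

/-- `⊡(β_{s+1}(x) ∧ β_{s+2}(y))`, the replacement of `x ◁ y` in `A*`. -/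
def relS (ts : TileSet) (v w : ℕ) : F ts :=
  bdia ts (.and (beta ts ⟨ts.s + 1, by omega⟩ v) (beta ts ⟨ts.s + 2, by omega⟩ w))

/-- `A₄* = ∀x∀y(⊡(β_{s+1}(x) ∧ β_{s+2}(y)) →
□(q ∧ P(x) ↔ ¬∀x P(x) ∧ ⊡^{s+4}(q ∧ P(y)) ∧ ¬⊡^{s+5}(q ∧ P(y))))` -/
def A4star (ts : TileSet) : F ts :=
  .all 0 (.all 1 (.imp (relS ts 0 1)
    (.box (.iff (MS ts 0)
      (.and (.neg (pfS ts))
        (.and (bdiaN ts (ts.s + 4) (MS ts 1)) (.neg (bdiaN ts (ts.s + 5) (MS ts 1)))))))))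

/-- `A₉* = ∀x(q ∧ P(x) → □⊡β₀(x))` -/
def A9star (ts : TileSet) : F ts :=
  .all 0 (.imp (MS ts 0) (.box (bdia ts (beta ts ⟨0, by omega⟩ 0))))

/-- The list `[A₀*, …, A₈*]`. -/
def BstarList (ts : TileSet) : List (F ts) :=
  [A0g ts (PfS ts), A1g ts (MS ts) (PfS ts), A2g ts (relS ts), A3g ts (relS ts) (MS ts),
   A4star ts, A5g ts (MS ts) (PfS ts), A6g ts (PfS ts), A7g ts (relS ts) (PfS ts),
   A8g ts (relS ts) (MS ts) (PfS ts)]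

/-- The formula `A*`: the conjunction of `A₀*` through `A₉*`. -/
def Astar (ts : TileSet) : F ts := .bigAnd (BstarList ts ++ [A9star ts])

/-- The formula `B*`: the conjunction of `A₀*` through `A₈*`. -/
def Bstar (ts : TileSet) : F ts := .bigAnd (BstarList ts)

/-- The formula `A⁺`: the result of replacing every `□` in `A*` by `□⁺`. -/
def Aplus (ts : TileSet) : F ts := (Astar ts).plus

/-- The formula `B⁺`: the result of replacing every `□` in `B*` by `□⁺`. -/
def Bplus (ts : TileSet) : F ts := (Bstar ts).plus

end Enc

end FOML
namespace FOML
open Enc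

section Sem
variable {W : Type*} {R : W → W → Prop} {Pred : ℕ → Type} (M : KModel W R Pred)

theorem truth_neg (φ : Fml Pred) (w : W) (g : ℕ → M.Dom) :
    truth M (.neg φ) w g ↔ ¬ truth M φ w g := Iff.rfl

theorem truth_imp (φ ψ : Fml Pred) (w : W) (g : ℕ → M.Dom) :
    truth M (.imp φ ψ) w g ↔ (truth M φ w g → truth M ψ w g) := Iff.rfl

theorem truth_box (φ : Fml Pred) (w : W) (g : ℕ → M.Dom) :
    truth M (.box φ) w g ↔ ∀ v, R w v → truth M φ v g := Iff.rfl

theorem truth_all (x : ℕ) (φ : Fml Pred) (w : W) (g : ℕ → M.Dom) :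
    truth M (.all x φ) w g ↔ ∀ d ∈ M.D w, truth M φ w (Function.update g x d) := Iff.rfl

theorem truth_and (φ ψ : Fml Pred) (w : W) (g : ℕ → M.Dom) :
    truth M (.and φ ψ) w g ↔ (truth M φ w g ∧ truth M ψ w g) := by
  simp only [Fml.and, truth_neg, truth_imp]; tauto

theorem truth_or (φ ψ : Fml Pred) (w : W) (g : ℕ → M.Dom) :
    truth M (.or φ ψ) w g ↔ (truth M φ w g ∨ truth M ψ w g) := by
  simp only [Fml.or, truth_neg, truth_imp]; tauto

theorem truth_iff (φ ψ : Fml Pred) (w : W) (g : ℕ → M.Dom) :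
    truth M (.iff φ ψ) w g ↔ (truth M φ w g ↔ truth M ψ w g) := by
  simp only [Fml.iff, truth_and, truth_imp]; tauto

theorem truth_dia (φ : Fml Pred) (w : W) (g : ℕ → M.Dom) :
    truth M (.dia φ) w g ↔ ∃ v, R w v ∧ truth M φ v g := by
  simp only [Fml.dia, truth_neg, truth_box]; push Not; rfl

theorem truth_ex (x : ℕ) (φ : Fml Pred) (w : W) (g : ℕ → M.Dom) :
    truth M (.ex x φ) w g ↔ ∃ d ∈ M.D w, truth M φ w (Function.update g x d) := by
  simp only [Fml.ex, truth_neg, truth_all]; push Not; rfl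

theorem truth_bigAnd (l : List (Fml Pred)) (w : W) (g : ℕ → M.Dom) :
    truth M (.bigAnd l) w g ↔ ∀ φ ∈ l, truth M φ w g := by
  induction l with
  | nil => simp only [Fml.bigAnd, Fml.top, truth_neg]; simp [truth]
  | cons a l ih => simp [Fml.bigAnd, truth_and, ih]

theorem truth_bigOr (l : List (Fml Pred)) (w : W) (g : ℕ → M.Dom) :
    truth M (.bigOr l) w g ↔ ∃ φ ∈ l, truth M φ w g := by
  induction l with
  | nil => simp [Fml.bigOr, truth]
  | cons a l ih => simp [Fml.bigOr, truth_or, ih]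

end Sem

section Enc
variable {ts : TileSet} (M : KModel ℕ (fun a b : ℕ => a ≤ b) (Letter ts.s))

/-- `x ◁ y` at `w`. -/
def sL (w : ℕ) (x y : M.Dom) : Prop := M.I w 2 Letter.lt ![x, y]
/-- `M(x)` at `w`. -/
def sM (w : ℕ) (x : M.Dom) : Prop := M.I w 1 Letter.M (fun _ => x)
/-- `P_t(x)` at `w`. -/
def sP (w : ℕ) (t : Fin (ts.s + 1)) (x : M.Dom) : Prop :=
  M.I w 1 (Letter.P (tl ts t)) (fun _ => x)
/-- `p` at `w`. -/
def sp (w : ℕ) : Prop := M.I w 0 Letter.p Fin.elim0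
/-- Semantic version of the marked diamond. -/
def sdia (p φ : ℕ → Prop) (w : ℕ) : Prop := ∃ a, w ≤ a ∧ p a ∧ ∃ b, a ≤ b ∧ ¬ p b ∧ φ b

theorem truth_pp (w : ℕ) (g : ℕ → M.Dom) : truth M (pp ts) w g ↔ sp M w := by
  simp only [pp, truth, sp]
  exact iff_of_eq (congrArg _ (funext fun i => i.elim0))

theorem truth_Mx (v w : ℕ) (g : ℕ → M.Dom) : truth M (Mx ts v) w g ↔ sM M w (g v) := Iff.rfl

theorem truth_PfA (t) (v w : ℕ) (g : ℕ → M.Dom) :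
    truth M (PfA ts t v) w g ↔ sP M w t (g v) := Iff.rfl

theorem truth_ltA (u v w : ℕ) (g : ℕ → M.Dom) :
    truth M (ltA ts u v) w g ↔ sL M w (g u) (g v) := by
  simp only [ltA, truth, sL]
  refine iff_of_eq (congrArg _ (funext fun i => ?_))
  fin_cases i <;> rfl

theorem truth_pdia (φ : F ts) (w : ℕ) (g : ℕ → M.Dom) :
    truth M (pdia ts (pp ts) φ) w g ↔ sdia (sp M) (fun b => truth M φ b g) w := by
  simp only [pdia, truth_dia, truth_and, truth_neg, truth_pp, sdia]

theorem truth_A (w : ℕ) (g : ℕ → M.Dom) : truth M (A ts) w g ↔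
    (∃ x ∈ M.D w, ∀ v, w ≤ v → ∀ t, ¬ sP M v t x) ∧
    (∃ x ∈ M.D w, (¬ ∀ t, ¬ sP M w t x) ∧ sM M w x) ∧
    (∀ x ∈ M.D w, ∃ y ∈ M.D w, sL M w x y) ∧
    (∀ x ∈ M.D w, ∀ y ∈ M.D w, sL M w x y → ∀ v, w ≤ v → (∃ z ∈ M.D v, sM M v z) →
      sL M v x y) ∧
    (∀ x ∈ M.D w, ∀ y ∈ M.D w, sL M w x y → ∀ v, w ≤ v → (sM M v x ↔
      (¬ sp M v ∧ sdia (sp M) (fun b => sM M b y) v ∧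
        ¬ sdia (sp M) (sdia (sp M) (fun b => sM M b y)) v))) ∧
    (∀ x ∈ M.D w, ∀ y ∈ M.D w, ∀ v, w ≤ v → ∀ t, sM M v x ∧ sP M v t y →
      ∀ u, v ≤ u → sM M u x → sP M u t y) ∧
    (∀ x ∈ M.D w, ∀ v, w ≤ v → ∀ t, sP M v t x → ∀ t', t' ≠ t → ¬ sP M v t' x) ∧
    (∀ x ∈ M.D w, ∀ y ∈ M.D w, ∀ v, w ≤ v → ∀ t, sL M v x y ∧ sP M v t x →
      ∃ t', ts.right t = ts.left t' ∧ sP M v t' y) ∧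
    (∀ x ∈ M.D w, ∀ y ∈ M.D w, ∀ v, w ≤ v → ∀ t, sM M v x ∧ sP M v t y →
      ∀ u, v ≤ u → (∃ z ∈ M.D u, sL M u x z ∧ sM M u z) →
        ∃ t', ts.up t = ts.down t' ∧ sP M u t' y) ∧
    (∀ x ∈ M.D w, sM M w x → ∀ v, w ≤ v → sdia (sp M) (fun b => sP M b 0 x) v) := by
  simp only [A, AlistB, truth_bigAnd, List.cons_append, List.nil_append, List.forall_mem_cons,
    A0g, A1g, A2g, A3g, A4g, A5g, A6g, A7g, A8g, A9g, Ug, pdiaN, truth_ex, truth_all, truth_box,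
    truth_imp, truth_and, truth_iff, truth_neg, truth_bigOr, List.mem_map, List.mem_filter,
    forall_exists_index, and_imp, forall_apply_eq_imp_iff, forall_apply_eq_imp_iff₂,
    exists_exists_and_eq_and, and_assoc,
    truth_pp, truth_Mx, truth_PfA, truth_ltA, truth_pdia, Function.update_self, tiles,
    List.mem_finRange, true_and, forall_const, decide_eq_true_eq, List.not_mem_nil]
  simp

end Enc

theorem sat_of_tiling (ts : TileSet) (f : ℕ → ℕ → Fin (ts.s + 1)) (h1 : ts.T1 f) (h2 : ts.T2 f)
    (h3 : ts.T3 f) : ¬ ValidOn (fun a b : ℕ => a ≤ b) (Fml.neg (A ts)) := by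
  intro hv
  let M : KModel ℕ (fun a b : ℕ => a ≤ b) (Letter ts.s) :=
    { Dom := Option ℕ
      D := fun _ => Set.univ
      D_ne := fun _ => ⟨none, trivial⟩
      D_mono := fun _ _ _ => subset_rfl
      I := fun w n P => match n, P with
        | _, Letter.lt => fun as => (as 0 = none ∧ as 1 = none) ∨
            ∃ n : ℕ, as 0 = some n ∧ as 1 = some (n + 1)
        | _, Letter.M => fun as => ∃ n : ℕ, as 0 = some n ∧ w = 2 * n
        | _, Letter.P j => fun as => ∃ n m : ℕ, as 0 = some n ∧ w = 2 * m ∧ (f n m).1 = j.1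
        | _, Letter.Pm => fun _ => False
        | _, Letter.p => fun _ => w % 2 = 1
        | _, Letter.q => fun _ => False
      I_dom := fun _ _ _ _ _ _ => trivial }
  have hD : ∀ w x, x ∈ M.D w := fun _ _ => trivial
  have hL : ∀ w x y, sL M w x y ↔ (x = none ∧ y = none) ∨
      ∃ n : ℕ, x = some n ∧ y = some (n + 1) := fun _ _ _ => Iff.rfl
  have hM : ∀ w x, sM M w x ↔ ∃ n : ℕ, x = some n ∧ w = 2 * n := fun _ _ => Iff.rfl
  have hP : ∀ w t x, sP M w t x ↔ ∃ n m : ℕ, x = some n ∧ w = 2 * m ∧ f n m = t := by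
    intro w t x
    have : sP M w t x ↔ ∃ n m : ℕ, x = some n ∧ w = 2 * m ∧ (f n m).1 = t.1 := Iff.rfl
    simp only [this, Fin.ext_iff]
  have hp : ∀ w, sp M w ↔ w % 2 = 1 := fun _ => Iff.rfl
  refine hv M 0 (fun _ => none) (fun _ => trivial) ((truth_A M 0 _).2 ?_)
  have hd : ∀ φ w, sdia (sp M) φ w ↔ ∃ a, w ≤ a ∧ a % 2 = 1 ∧ ∃ b, a ≤ b ∧ ¬ b % 2 = 1 ∧ φ b :=
    fun _ _ => Iff.rfl
  refine ⟨⟨none, trivial, ?_⟩, ⟨some 0, trivial, ?_, ?_⟩, ?_, ?_, ?_, ?_, ?_, ?_, ?_, ?_⟩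
  · intro v _ t ht
    obtain ⟨n, m, h, -⟩ := (hP _ _ _).1 ht
    cases h
  · intro h
    exact h (f 0 0) ((hP _ _ _).2 ⟨0, 0, rfl, rfl, rfl⟩)
  · exact (hM _ _).2 ⟨0, rfl, rfl⟩
  · intro x _
    rcases x with _ | n
    · exact ⟨none, trivial, (hL _ _ _).2 (Or.inl ⟨rfl, rfl⟩)⟩
    · exact ⟨some (n + 1), trivial, (hL _ _ _).2 (Or.inr ⟨n, rfl, rfl⟩)⟩
  · intro x _ y _ h v _ _
    exact h
  · intro x _ y _ h v _
    have hMs : ∀ w (n : ℕ), sM M w (some n) ↔ w = 2 * n := by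
      intro w n
      rw [hM]
      constructor
      · rintro ⟨k, hk, e⟩
        cases hk
        exact e
      · intro e
        exact ⟨n, rfl, e⟩
    rcases (hL _ _ _).1 h with ⟨rfl, rfl⟩ | ⟨n, rfl, rfl⟩
    · have hno : ∀ w, ¬ sM M w none := by
        rintro w ⟨k, hk, -⟩
        cases hk
      constructor
      · intro h'
        exact absurd h' (hno v)
      · rintro ⟨-, ⟨_, _, _, b, _, _, hb⟩, -⟩
        exact absurd hb (hno b)
    · rw [hMs, hp, hd, hd]
      constructor
      · rintro rfl
        refine ⟨by omega, ⟨2 * n + 1, by omega, by omega, 2 * (n + 1), by omega, by omega,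
          (hMs _ _).2 rfl⟩, ?_⟩
        rintro ⟨a, h1, h2, b, h3, h4, c, h5, h6, d, h7, h8, h9⟩
        have h6 := (hp _).1 h6
        have h9 := (hMs _ _).1 h9
        omega
      · rintro ⟨h0, ⟨a, h1, h2, b, h3, h4, h5⟩, h6⟩
        have h5 := (hMs _ _).1 h5
        by_contra hne
        refine h6 ⟨v + 1, by omega, by omega, v + 2, by omega, by omega, v + 3, by omega,
          (hp _).2 (by omega), 2 * (n + 1), by omega, ?_, (hMs _ _).2 rfl⟩
        rw [hp]
        omega
  · rintro x _ y _ v _ t ⟨h, hy⟩ u _ h'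
    obtain ⟨n, rfl, e⟩ := (hM _ _).1 h
    obtain ⟨n', hn, e'⟩ := (hM _ _).1 h'
    cases hn
    rw [e', ← e]
    exact hy
  · intro x _ v _ t ht t' hne ht'
    obtain ⟨n, m, hx, e, h⟩ := (hP _ _ _).1 ht
    obtain ⟨n', m', hx', e', h'⟩ := (hP _ _ _).1 ht'
    have hn : some n = some n' := hx.symm.trans hx'
    cases hn
    have hm : m = m' := by omega
    subst hm
    exact hne (h'.symm.trans h)
  · rintro x _ y _ v _ t ⟨h, ht⟩
    obtain ⟨n, m, rfl, e, hf⟩ := (hP _ _ _).1 ht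
    rcases (hL _ _ _).1 h with ⟨h', -⟩ | ⟨k, hk, rfl⟩
    · cases h'
    · cases hk
      refine ⟨f (n + 1) m, ?_, (hP _ _ _).2 ⟨n + 1, m, rfl, e, rfl⟩⟩
      rw [← hf]
      exact h1 n m
  · rintro x _ y _ v _ t ⟨h, ht⟩ u _ ⟨z, _, hz, hz'⟩
    obtain ⟨n, m, rfl, e, hf⟩ := (hP _ _ _).1 ht
    obtain ⟨k, rfl, e'⟩ := (hM _ _).1 h
    obtain ⟨j, rfl, e''⟩ := (hM _ _).1 hz'
    rcases (hL _ _ _).1 hz with ⟨h', -⟩ | ⟨i, hi, hj⟩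
    · cases h'
    · cases hi
      cases hj
      refine ⟨f n (m + 1), ?_, (hP _ _ _).2 ⟨n, m + 1, rfl, by omega, rfl⟩⟩
      rw [← hf]
      exact h2 n m
  · intro x _ hx v _
    obtain ⟨n, rfl, e⟩ := (hM _ _).1 hx
    have hn : n = 0 := by omega
    subst hn
    obtain ⟨m, hm, hlt⟩ := h3.exists_gt (v + 1)
    refine ⟨2 * v + 1, by omega, (hp _).2 (by omega), 2 * m, by omega, ?_,
      (hP _ _ _).2 ⟨0, m, rfl, rfl, hm⟩⟩
    rw [hp]
    omega

theorem tiling_of_sat (ts : TileSet) (M : KModel ℕ (fun a b : ℕ => a ≤ b) (Letter ts.s))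
    (w : ℕ) (g : ℕ → M.Dom) (h : truth M (A ts) w g) :
    ∃ f : ℕ → ℕ → Fin (ts.s + 1), ts.T1 f ∧ ts.T2 f ∧ ts.T3 f := by
  obtain ⟨-, ⟨x0, hx0, hU, hMx0⟩, a2, a3, a4, a5, a6, a7, a8, a9⟩ := (truth_A M w g).1 h
  choose! s hsD hsL using a2
  let a : ℕ → M.Dom := fun n => s^[n] x0
  have ha0 : a 0 = x0 := rfl
  have haS : ∀ n, a (n + 1) = s (a n) := fun n => Function.iterate_succ_apply' s n x0
  have haD : ∀ n, a n ∈ M.D w := by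
    intro n
    induction n with
    | zero => exact hx0
    | succ n ih => rw [haS]; exact hsD _ ih
  have haL : ∀ n, sL M w (a n) (a (n + 1)) := fun n => by rw [haS]; exact hsL _ (haD n)
  clear_value a
  have b4 := fun n => a4 _ (haD n) _ (haD (n + 1)) (haL n)
  have next : ∀ n v, w ≤ v → sM M v (a n) → ∃ u, v ≤ u ∧ sM M u (a (n + 1)) := by
    intro n v hv hm
    obtain ⟨-, ⟨c, hc, -, b, hb, -, hb2⟩, -⟩ := (b4 n v hv).1 hm
    exact ⟨b, hc.trans hb, hb2⟩
  have hW : ∃ W : ℕ → ℕ, ∀ n, (w ≤ W n ∧ sM M (W n) (a n)) ∧ W n ≤ W (n + 1) := by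
    choose! nx hnx1 hnx2 using next
    let W : ℕ → ℕ := fun n => Nat.rec w (fun n v => nx n v) n
    have key : ∀ n, w ≤ W n ∧ sM M (W n) (a n) := by
      intro n
      induction n with
      | zero => exact ⟨le_rfl, ha0 ▸ hMx0⟩
      | succ n ih => exact ⟨ih.1.trans (hnx1 n _ ih.1 ih.2), hnx2 n _ ih.1 ih.2⟩
    exact ⟨W, fun n => ⟨key n, hnx1 n _ (key n).1 (key n).2⟩⟩
  obtain ⟨W, hW⟩ := hW
  -- block invariance
  have hblk : ∀ n u v, w ≤ u → u ≤ v → (∀ c, u ≤ c → c ≤ v → ¬ sp M c) →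
      (sM M u (a n) ↔ sM M v (a n)) := by
    intro n u v hu huv hc
    have hd : ∀ φ, sdia (sp M) φ u ↔ sdia (sp M) φ v := by
      intro φ
      constructor
      · rintro ⟨c, h1, h2, h3⟩
        refine ⟨c, ?_, h2, h3⟩
        by_contra hcv
        exact hc c h1 (by omega) h2
      · rintro ⟨c, h1, h2⟩
        exact ⟨c, huv.trans h1, h2⟩
    rw [b4 n u hu, b4 n v (hu.trans huv), hd, hd]
    simp [hc u le_rfl huv, hc v huv le_rfl]
  have cover : ∀ N v, W N ≤ v → ¬ sp M v → ∃ n, N ≤ n ∧ sM M v (a n) := by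
    intro N v
    induction v using Nat.strong_induction_on with
    | _ v ih =>
      intro hv hpv
      by_cases hvw : v = W N
      · exact ⟨N, le_rfl, hvw ▸ (hW N).1.2⟩
      classical
      have hWp : ¬ sp M (W N) := ((b4 N _ (hW N).1.1).1 (hW N).1.2).1
      have hex : ∃ u, W N ≤ u ∧ u < v ∧ ¬ sp M u ∧ ∀ c, u < c → c < v → sp M c := by
        let Q : ℕ → Prop := fun u => W N ≤ u ∧ ¬ sp M u
        have hQ : Q (Nat.findGreatest Q (v - 1)) :=
          Nat.findGreatest_spec (m := W N) (by omega) ⟨le_rfl, hWp⟩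
        have hle := Nat.findGreatest_le (P := Q) (v - 1)
        refine ⟨Nat.findGreatest Q (v - 1), hQ.1, by omega, hQ.2, fun c h1 h2 => ?_⟩
        have := Nat.findGreatest_is_greatest h1 (by omega)
        by_contra hcp
        exact this ⟨hQ.1.trans h1.le, hcp⟩
      obtain ⟨u, hu1, hu2, hu3, hu4⟩ := hex
      obtain ⟨n, hn, hm⟩ := ih u hu2 hu1 hu3
      have hwu : w ≤ u := (hW N).1.1.trans hu1
      by_cases huv : u + 1 = v
      · refine ⟨n, hn, (hblk n u v hwu hu2.le ?_).1 hm⟩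
        intro c h1 h2
        rcases (show c = u ∨ c = v by omega) with rfl | rfl <;> assumption
      refine ⟨n + 1, by omega, ?_⟩
      obtain ⟨-, ⟨c, hc, hcp, b, hb, hbp, hbm⟩, hnn⟩ := (b4 n u hwu).1 hm
      have huc : u ≠ c := fun h => hu3 (h ▸ hcp)
      have hvb : v ≤ b := by
        by_contra hlt
        exact hbp (hu4 b (by omega) (by omega))
      refine (hblk (n + 1) v b (by omega) hvb ?_).2 hbm
      intro d h1 h2 hd
      exact hnn ⟨u + 1, by omega, hu4 _ (by omega) (by omega), v, by omega, hpv,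
        d, h1, hd, b, h2, hbp, hbm⟩
  have hLW : ∀ n m, sL M (W m) (a n) (a (n + 1)) := fun n m =>
    a3 _ (haD n) _ (haD (n + 1)) (haL n) _ (hW m).1.1
      ⟨a m, M.D_mono (hW m).1.1 (haD m), (hW m).1.2⟩
  have hup : ∀ n m t, sP M (W m) t (a n) →
      ∃ t', ts.up t = ts.down t' ∧ sP M (W (m + 1)) t' (a n) := fun n m t ht =>
    a8 _ (haD m) _ (haD n) _ (hW m).1.1 t ⟨(hW m).1.2, ht⟩ _ (hW m).2
      ⟨a (m + 1), M.D_mono (hW (m + 1)).1.1 (haD (m + 1)), hLW _ _, (hW (m + 1)).1.2⟩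
  have hright : ∀ n m t, sP M (W m) t (a n) →
      ∃ t', ts.right t = ts.left t' ∧ sP M (W m) t' (a (n + 1)) := fun n m t ht =>
    a7 _ (haD n) _ (haD (n + 1)) _ (hW m).1.1 t ⟨hLW n m, ht⟩
  have uniq : ∀ v, w ≤ v → ∀ n t t', sP M v t (a n) → sP M v t' (a n) → t = t' := by
    intro v hv n t t' h1 h2
    by_contra hne
    exact a6 _ (haD n) v hv t h1 t' (Ne.symm hne) h2
  have h0 : ∀ m, ∃ t, sP M (W m) t (a 0) := by
    intro m
    induction m with
    | zero =>
      have : ∃ t, sP M w t x0 := by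
        by_contra hno
        exact hU fun t ht => hno ⟨t, ht⟩
      obtain ⟨t, ht⟩ := this
      rw [← ha0] at ht
      exact ⟨t, a5 _ (haD 0) _ (haD 0) w le_rfl t ⟨ha0 ▸ hMx0, ht⟩ _ (hW 0).1.1 (hW 0).1.2⟩
    | succ m ih =>
      obtain ⟨t, ht⟩ := ih
      obtain ⟨t', -, h⟩ := hup 0 m t ht
      exact ⟨t', h⟩
  have hall : ∀ n m, ∃ t, sP M (W m) t (a n) := by
    intro n m
    induction n with
    | zero => exact h0 m
    | succ n ih =>
      obtain ⟨t, ht⟩ := ih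
      obtain ⟨t', -, h⟩ := hright n m t ht
      exact ⟨t', h⟩
  choose f hf using hall
  refine ⟨f, ?_, ?_, ?_⟩
  · intro n m
    obtain ⟨t', e, h⟩ := hright n m _ (hf n m)
    rw [e, uniq _ (hW m).1.1 _ _ _ h (hf (n + 1) m)]
  · intro n m
    obtain ⟨t', e, h⟩ := hup n m _ (hf n m)
    rw [e, uniq _ (hW (m + 1)).1.1 _ _ _ h (hf n (m + 1))]
  · refine Set.infinite_of_not_bddAbove ?_
    rintro ⟨N, hN⟩
    obtain ⟨c, hc, hcp, v, hv, hvp, hv0⟩ := a9 x0 hx0 hMx0 (W (N + 1)) (hW (N + 1)).1.1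
    rw [← ha0] at hv0
    have hwv : w ≤ v := (hW (N + 1)).1.1.trans (hc.trans hv)
    obtain ⟨m, hm, hmv⟩ := cover (N + 1) v (hc.trans hv) hvp
    have hfm : f 0 m = 0 := by
      rcases le_total v (W m) with hle | hle
      · exact uniq _ (hW m).1.1 0 _ _ (hf 0 m)
          (a5 _ (haD m) _ (haD 0) v hwv 0 ⟨hmv, hv0⟩ _ hle (hW m).1.2)
      · exact uniq v hwv 0 _ _
          (a5 _ (haD m) _ (haD 0) _ (hW m).1.1 _ ⟨(hW m).1.2, hf 0 m⟩ v hle hmv) hv0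
    have : m ≤ N := hN hfm
    omega

theorem statement0 (ts : TileSet) :
    (∃ f : ℕ → ℕ → Fin (ts.s + 1), ts.T1 f ∧ ts.T2 f ∧ ts.T3 f) ↔
      ¬ ValidOn (fun a b : ℕ => a ≤ b) (Fml.neg (A ts)) := by
  constructor
  · rintro ⟨f, h1, h2, h3⟩
    exact sat_of_tiling ts f h1 h2 h3
  · intro h
    by_contra hno
    exact h fun M w g _ hA => hno (tiling_of_sat ts M w g hA)

end FOML
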